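/- Let Q be a regular local ring, f₁,…,f_c a Q-regular sequence, and R = Q/(f₁,…,f_c) (a local complete intersection). Let M, N, L be finitely generated R-modules with N ≠ 0 and Tor_i^R(M,N) = 0 for all i > 0. If Tor_i^R(M ⊗_R N, L) = 0 for all sufficiently large i, then Tor_i^R(M, L) = 0 for all sufficiently large i. -/

import Mathlib

/-!
STATEMENT 2: If `R = Q ⧸ (f₁, …, f_c)` is a local complete intersection (`Q` regular local,
`f` a `Q`-regular sequence), `M, N, L` are finitely generated `R`-modules with `N ≠ 0` and
`Tor_i^R(M, N) = 0` for all `i > 0`, and `Tor_i^R(M ⊗_R N, L) = 0` for `i ≫ 0`, then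
`Tor_i^R(M, L) = 0` for `i ≫ 0`.
-/

open CategoryTheory CategoryTheory.Limits

universe u

/-- A Noetherian local ring is regular if its maximal ideal can be generated by
(Krull dimension of the ring) many elements. -/
def IsRegularLocal (Q : Type u) [CommRing Q] [IsLocalRing Q] : Prop :=
  IsNoetherianRing Q ∧ ∃ s : Finset Q, Ideal.span (s : Set Q) = IsLocalRing.maximalIdeal Q ∧
    (s.card : WithBot ℕ∞) = ringKrullDim Q

/-!
Over `R`, a nonzero finite module `N` detects eventual acyclicity: a complex `X` of finite free
modules with `X ⊗ N` exact in large degrees is itself exact in large degrees. This is seen by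
lifting the matrices of `X` to `Q` and inducting on `f`, a complex modulo `(J, x)` being replaced
by the mapping cone of `x`, corrected to be a complex modulo `J`. Over `Q` itself, the same
argument along a regular system of parameters compares `N` with the residue field.

Let `G` be a free resolution of `L` and `X → M ⊗ G` a surjection with acyclic kernel from a complex
of finite free modules. As `Tor_i(M, N) = 0` for `i > 0`, the kernel stays exact after `- ⊗ N`, so
`X ⊗ N` is exact in large degrees because `(M ⊗ G) ⊗ N ≅ (M ⊗ N) ⊗ G` is. Hence so are `X` and
`M ⊗ G`.
-/

section MatrixAction

variable {R : Type*} [CommRing R] {l m n : Type*} [Fintype n]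
  (W : Type*) [AddCommGroup W] [Module R W] {V : Type*} [AddCommGroup V] [Module R V]

/-- The action of matrices over `R` on column vectors with entries in an `R`-module `W`, i.e.
`A ⊗ W` after identifying `(n → R) ⊗ W` with `n → W`. -/
def matrixAct : Matrix m n R →ₗ[R] (n → W) →ₗ[R] (m → W) :=
  LinearMap.mk₂ R (fun A v i => ∑ j, A i j • v j)
    (fun A B v => by ext i; simp [add_smul, Finset.sum_add_distrib])
    (fun c A v => by ext i; simp [mul_smul, Finset.smul_sum])
    (fun A v w => by ext i; simp [Finset.sum_add_distrib])
    (fun c A v => by ext i; simp [Finset.smul_sum, smul_comm c])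

variable {W}

theorem matrixAct_apply (A : Matrix m n R) (v : n → W) (i : m) :
    matrixAct W A v i = ∑ j, A i j • v j := rfl

theorem matrixAct_mul [Fintype m] (A : Matrix l m R) (B : Matrix m n R) (v : n → W) :
    matrixAct W (A * B) v = matrixAct W A (matrixAct W B v) := by
  ext i
  simp only [matrixAct_apply, Matrix.mul_apply, Finset.sum_smul, Finset.smul_sum, mul_smul]
  exact Finset.sum_comm

theorem matrixAct_comp (A : Matrix m n R) (φ : V →ₗ[R] W) (v : n → V) :
    matrixAct W A (φ ∘ v) = φ ∘ matrixAct V A v := by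
  ext i
  simp [matrixAct_apply]

theorem matrixAct_one [DecidableEq n] (v : n → W) : matrixAct W (1 : Matrix n n R) v = v := by
  ext i
  simp [matrixAct_apply, Matrix.one_apply, ite_smul]

theorem matrixAct_fromBlocks_elim [Fintype m] {p q : Type*} (A : Matrix p m R) (B : Matrix p n R)
    (C : Matrix q m R) (D : Matrix q n R) (v : m → W) (w : n → W) :
    matrixAct W (Matrix.fromBlocks A B C D) (Sum.elim v w) =
      Sum.elim (matrixAct W A v + matrixAct W B w) (matrixAct W C v + matrixAct W D w) := by
  ext (i | i) <;> simp [matrixAct_apply]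

theorem matrixAct_map_algebraMap {S : Type*} [CommRing S] [Algebra R S] [Module S W]
    [IsScalarTower R S W] (A : Matrix m n R) (v : n → W) :
    matrixAct W (A.map (algebraMap R S)) v = matrixAct W A v := by
  ext i
  simp [matrixAct_apply]

theorem matrixAct_toMatrix' [DecidableEq n] (f : (n → R) →ₗ[R] (m → R)) :
    matrixAct R (LinearMap.toMatrix' f) = f :=
  LinearMap.ext (LinearMap.toMatrix'_mulVec f)

theorem matrixAct_eq_zero_of_forall_mem {J : Ideal R} (hJ : J ≤ Module.annihilator R W)
    {A : Matrix m n R} (hA : ∀ i k, A i k ∈ J) : matrixAct W A = 0 := by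
  ext v i
  exact Finset.sum_eq_zero fun k _ => Module.mem_annihilator.1 (hJ (hA i k)) (v k)

theorem forall_mem_of_matrixAct_quotient_eq_zero {J : Ideal R} {A : Matrix m n R}
    (hA : matrixAct (R ⧸ J) A = 0) (i : m) (k : n) : A i k ∈ J := by
  classical
  have h := congrFun (LinearMap.congr_fun hA (Pi.single k 1)) i
  rw [matrixAct_apply, Finset.sum_eq_single k (by simp +contextual) (by simp)] at h
  simpa [Algebra.smul_def, Ideal.Quotient.eq_zero_iff_mem] using h

end MatrixAction

section EventualVanishing

open Filter

variable {Q : Type*} [CommRing Q] {ι : ℕ → Type*} [∀ n, Fintype (ι n)]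
  {V W W' : Type*} [AddCommGroup V] [Module Q V] [AddCommGroup W] [Module Q W]
  [AddCommGroup W'] [Module Q W']

/-- The map induced by `φ : V → W` from the homology of `d ⊗ V` to the homology of `d ⊗ W`, for a
sequence `d` of matrices, vanishes in all large degrees. No complex is required: each `V`-valued
cycle becomes a `W`-valued boundary. -/
def HomologyEventuallyNull (φ : V →ₗ[Q] W) (d : ∀ n, Matrix (ι n) (ι (n + 1)) Q) : Prop :=
  ∀ᶠ n in atTop, ∀ v : ι (n + 1) → V, matrixAct V (d n) v = 0 →
    ∃ w, matrixAct W (d (n + 1)) w = φ ∘ v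

/-- The sequence `d ⊗ W` has no homology in large degrees. -/
abbrev EventuallyAcyclic (W : Type*) [AddCommGroup W] [Module Q W]
    (d : ∀ n, Matrix (ι n) (ι (n + 1)) Q) : Prop :=
  HomologyEventuallyNull (LinearMap.id : W →ₗ[Q] W) d

variable {d : ∀ n, Matrix (ι n) (ι (n + 1)) Q}

theorem HomologyEventuallyNull.comp_left {φ : V →ₗ[Q] W} (h : HomologyEventuallyNull φ d)
    (ψ : W →ₗ[Q] W') : HomologyEventuallyNull (ψ ∘ₗ φ) d := by
  filter_upwards [h] with n hn v hv
  obtain ⟨w, hw⟩ := hn v hv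
  exact ⟨ψ ∘ w, by rw [matrixAct_comp, hw]; rfl⟩

theorem HomologyEventuallyNull.comp_right {ψ : W →ₗ[Q] W'} (h : HomologyEventuallyNull ψ d)
    (φ : V →ₗ[Q] W) : HomologyEventuallyNull (ψ ∘ₗ φ) d := by
  filter_upwards [h] with n hn v hv
  exact hn (φ ∘ v) (by rw [matrixAct_comp, hv]; ext; simp)

end EventualVanishing

section TwistedCone

open Filter

variable {Q : Type*} [CommRing Q] {ι : ℕ → Type*} [∀ n, Fintype (ι n)]

open Classical in
/-- The mapping cone of multiplication by `x` on `d`, corrected by `t` so as to be a complex when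
`d` is one only modulo `x`, with `d ∘ d = x • t`. For `t = 0` it is the usual mapping cone. -/
noncomputable def twistedCone (d : ∀ n, Matrix (ι n) (ι (n + 1)) Q) (x : Q)
    (t : ∀ n, Matrix (ι n) (ι (n + 2)) Q) (n : ℕ) :
    Matrix (ι (n + 1) ⊕ ι n) (ι (n + 2) ⊕ ι (n + 1)) Q :=
  Matrix.fromBlocks (d (n + 1)) (x • 1) (-(t n)) (-(d n))

variable {d : ∀ n, Matrix (ι n) (ι (n + 1)) Q} {x : Q} {t : ∀ n, Matrix (ι n) (ι (n + 2)) Q}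
  {V V' W : Type*} [AddCommGroup V] [Module Q V] [AddCommGroup V'] [Module Q V']
  [AddCommGroup W] [Module Q W]

theorem matrixAct_twistedCone_elim (n : ℕ) (a : ι (n + 2) → W) (b : ι (n + 1) → W) :
    matrixAct W (twistedCone d x t n) (Sum.elim a b) =
      Sum.elim (matrixAct W (d (n + 1)) a + x • b)
        (-matrixAct W (t n) a - matrixAct W (d n) b) := by
  simp [twistedCone, matrixAct_fromBlocks_elim, matrixAct_one, sub_eq_add_neg]

theorem matrixAct_twistedCone_elim_eq_zero {n : ℕ} {a : ι (n + 2) → W} {b : ι (n + 1) → W} :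
    matrixAct W (twistedCone d x t n) (Sum.elim a b) = 0 ↔
      matrixAct W (d (n + 1)) a + x • b = 0 ∧ matrixAct W (t n) a + matrixAct W (d n) b = 0 := by
  rw [matrixAct_twistedCone_elim, ← Sum.elim_zero_zero, Sum.elim_eq_iff, ← neg_add', neg_eq_zero]

theorem matrixAct_twistedCone_sq (hx : IsSMulRegular V x)
    (ht : ∀ n v, matrixAct V (d n) (matrixAct V (d (n + 1)) v) = x • matrixAct V (t n) v)
    (n : ℕ) (v : ι (n + 3) ⊕ ι (n + 2) → V) :
    matrixAct V (twistedCone d x t n) (matrixAct V (twistedCone d x t (n + 1)) v) = 0 := by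
  have hcomm (a : ι (n + 3) → V) : matrixAct V (d n) (matrixAct V (t (n + 1)) a) =
      matrixAct V (t n) (matrixAct V (d (n + 2)) a) :=
    IsSMulRegular.pi (fun _ => hx) (by simp only [← map_smul, ← ht])
  rw [← Sum.elim_comp_inl_inr v, matrixAct_twistedCone_elim, matrixAct_twistedCone_elim_eq_zero]
  simp only [map_add, map_sub, map_neg, map_smul, ht, hcomm, smul_sub, smul_neg]
  exact ⟨by abel, by abel⟩

/-- As `x` kills `W`, the cone on `W` is an extension of two copies of `d ⊗ W`. -/
theorem EventuallyAcyclic.twistedCone_of_smul_eq_zero (hd : EventuallyAcyclic W d)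
    (hx : ∀ w : W, x • w = 0)
    (hsq : ∀ n v, matrixAct W (twistedCone d x t n)
      (matrixAct W (twistedCone d x t (n + 1)) v) = 0) :
    EventuallyAcyclic W (twistedCone d x t) := by
  have hx' {κ : Type _} (v : κ → W) : x • v = 0 := funext fun i => hx (v i)
  filter_upwards [hd, (tendsto_add_atTop_nat 1).eventually hd] with n hn hn' v hv
  obtain ⟨a, b, rfl⟩ : ∃ a b, v = Sum.elim a b := ⟨_, _, (Sum.elim_comp_inl_inr v).symm⟩
  obtain ⟨ha, hab⟩ := matrixAct_twistedCone_elim_eq_zero.1 hv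
  obtain ⟨a', (rfl : _ = a)⟩ := hn' a (by rwa [hx', add_zero] at ha)
  have hta := hsq n (Sum.elim a' 0)
  rw [matrixAct_twistedCone_elim, matrixAct_twistedCone_elim_eq_zero] at hta
  obtain ⟨b', hb'⟩ := hn (b + matrixAct W (t (n + 1)) a') (by
    have hdt := hta.2
    simp only [map_zero, smul_zero, add_zero, sub_zero, map_neg, add_neg_eq_zero] at hdt
    rw [map_add, ← hdt, add_comm, hab])
  refine ⟨Sum.elim a' (-b'), ?_⟩
  rw [matrixAct_twistedCone_elim, hx', map_neg, hb']
  simp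

theorem EventuallyAcyclic.cone (hd : EventuallyAcyclic W d) (x : Q) :
    EventuallyAcyclic W (twistedCone d x 0) := by
  filter_upwards [hd, (tendsto_add_atTop_nat 1).eventually hd] with n hn hn' v hv
  obtain ⟨a, b, rfl⟩ : ∃ a b, v = Sum.elim a b := ⟨_, _, (Sum.elim_comp_inl_inr v).symm⟩
  obtain ⟨ha, hb⟩ := matrixAct_twistedCone_elim_eq_zero.1 hv
  obtain ⟨b', (rfl : _ = b)⟩ := hn b (by simpa using hb)
  obtain ⟨a', ha'⟩ := hn' (a + x • b') (by simpa using ha)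
  refine ⟨Sum.elim a' (-b'), ?_⟩
  rw [matrixAct_twistedCone_elim, ha']
  simp

/-- In the long exact sequence of the cone the boundary map is multiplication by `x`, so a cycle
on `V / xV` lifts to a cycle of the cone on `V`. -/
theorem HomologyEventuallyNull.of_twistedCone {π : V →ₗ[Q] V'} {ψ : V' →ₗ[Q] W}
    (hπ : Function.Surjective π) (hker : ∀ v, π v = 0 → ∃ u, x • u = v)
    (hxV : IsSMulRegular V x) (hxW : ∀ w : W, x • w = 0)
    (ht : ∀ n v, matrixAct V (d n) (matrixAct V (d (n + 1)) v) = x • matrixAct V (t n) v)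
    (h : HomologyEventuallyNull (ψ ∘ₗ π) (twistedCone d x t)) :
    HomologyEventuallyNull ψ d := by
  rw [HomologyEventuallyNull, ← map_add_atTop_eq_nat 1, eventually_map]
  filter_upwards [h] with n hn v' hv'
  obtain ⟨v, rfl⟩ : ∃ v, π ∘ v = v' := hπ.comp_left v'
  rw [matrixAct_comp] at hv'
  choose u hu using fun i => hker _ (congrFun hv' i)
  replace hu : x • u = matrixAct V (d (n + 1)) v := funext hu
  have htu : matrixAct V (t n) v = matrixAct V (d n) u :=
    IsSMulRegular.pi (fun _ => hxV) (by simp only [← ht, ← map_smul, hu])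
  obtain ⟨w, hw⟩ := hn (Sum.elim v (-u)) (by
    simp [matrixAct_twistedCone_elim_eq_zero, hu, htu])
  refine ⟨w ∘ Sum.inl, ?_⟩
  rw [← Sum.elim_comp_inl_inr w, matrixAct_twistedCone_elim] at hw
  ext i
  simpa [hxW] using congrFun hw (Sum.inl i)

end TwistedCone

section LocalExactness

open IsLocalRing TensorProduct

variable {Q : Type*} [CommRing Q] {l m n : Type*} [Fintype m] [Fintype n]

theorem matrixAct_comp_piScalarRight [DecidableEq m] [DecidableEq n] (W : Type*)
    [AddCommGroup W] [Module Q W] (A : Matrix m n Q) :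
    matrixAct W A ∘ₗ (piScalarRight Q Q W n).toLinearMap =
      (piScalarRight Q Q W m).toLinearMap ∘ₗ (matrixAct Q A).lTensor W := by
  refine TensorProduct.ext' fun w v => ?_
  ext i
  simp [matrixAct_apply, Finset.sum_smul, mul_smul]

theorem exact_lTensor_matrixAct_iff [Finite l] (W : Type*) [AddCommGroup W] [Module Q W]
    (A : Matrix l m Q) (B : Matrix m n Q) :
    Function.Exact ((matrixAct Q B).lTensor W) ((matrixAct Q A).lTensor W) ↔
      Function.Exact (matrixAct W B) (matrixAct W A) := by
  classical
  have := Fintype.ofFinite l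
  exact (Function.Exact.iff_of_ladder_linearEquiv (matrixAct_comp_piScalarRight W B)
    (matrixAct_comp_piScalarRight W A)).symm

theorem exact_of_exact_lTensor_residueField [IsLocalRing Q] {F G H : Type*}
    [AddCommGroup F] [Module Q F] [AddCommGroup G] [Module Q G] [Module.Finite Q G]
    [AddCommGroup H] [Module Q H] [Module.Finite Q H] [Module.Free Q H]
    {f : F →ₗ[Q] G} {g : G →ₗ[Q] H} (hgf : g ∘ₗ f = 0)
    (h : Function.Exact (f.lTensor (ResidueField Q)) (g.lTensor (ResidueField Q))) :
    Function.Exact f g := by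
  let C := LinearMap.range f
  let g' : G ⧸ C →ₗ[Q] H := C.liftQ g (LinearMap.range_le_ker_iff.2 hgf)
  have hg' : g' ∘ₗ C.mkQ = g := C.liftQ_mkQ g _
  have hinj : Function.Injective (g'.lTensor (ResidueField Q)) := by
    refine (injective_iff_map_eq_zero _).2 fun y hy => ?_
    obtain ⟨x, rfl⟩ := LinearMap.lTensor_surjective (ResidueField Q) C.mkQ_surjective y
    rw [← LinearMap.lTensor_comp_apply, hg'] at hy
    obtain ⟨z, rfl⟩ := (h x).1 hy
    rw [← LinearMap.lTensor_comp_apply, LinearMap.range_mkQ_comp, LinearMap.lTensor_zero,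
      LinearMap.zero_apply]
  obtain ⟨r, hr⟩ := (split_injective_iff_lTensor_residueField_injective g').2 hinj
  have hg'_inj : Function.Injective g' :=
    Function.LeftInverse.injective (LinearMap.congr_fun hr)
  rw [← hg', LinearMap.coe_comp]
  exact (LinearMap.exact_map_mkQ_range f).comp_injective g' hg'_inj (map_zero g')

end LocalExactness

section Amplitude

open Filter RingTheory.Sequence IsLocalRing

variable {Q : Type*} [CommRing Q] {W : Type*} [AddCommGroup W] [Module Q W]

/-- Sequences of matrices that are complexes modulo `J` have no homology modulo `J` in large
degrees as soon as their homology with coefficients in `W` vanishes in large degrees. -/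
def DetectsEventualAcyclicity (W : Type*) [AddCommGroup W] [Module Q W] (J : Ideal Q) : Prop :=
  ∀ (ι : ℕ → Type) [∀ n, Fintype (ι n)] (d : ∀ n, Matrix (ι n) (ι (n + 1)) Q),
    (∀ n i k, (d n * d (n + 1)) i k ∈ J) → EventuallyAcyclic W d → EventuallyAcyclic (Q ⧸ J) d

theorem exists_smul_eq_of_factor_eq_zero {J : Ideal Q} {x : Q} (v : Q ⧸ J)
    (hv : Submodule.factor (le_sup_left : J ≤ J ⊔ Ideal.span {x}) v = 0) :
    ∃ u : Q ⧸ J, x • u = v := by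
  obtain ⟨q, rfl⟩ := Submodule.mkQ_surjective J v
  obtain ⟨a, ha, b, hb, rfl⟩ := Submodule.mem_sup.1
    ((Submodule.Quotient.mk_eq_zero (J ⊔ Ideal.span {x})).1 hv)
  obtain ⟨c, rfl⟩ := Ideal.mem_span_singleton'.1 hb
  refine ⟨Submodule.Quotient.mk c, ?_⟩
  rw [← Submodule.Quotient.mk_smul, Submodule.mkQ_apply, Submodule.Quotient.eq]
  simpa [mul_comm x c] using ha

theorem DetectsEventualAcyclicity.sup_span {J : Ideal Q} {x : Q}
    (h : DetectsEventualAcyclicity W J) (hx : IsSMulRegular (Q ⧸ J) x)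
    (hJ : J ≤ Module.annihilator Q W) (hxW : ∀ w : W, x • w = 0) :
    DetectsEventualAcyclicity W (J ⊔ Ideal.span {x}) := by
  intro ι _ d hd hW
  have hdt (n i k) : ∃ a, (d n * d (n + 1)) i k - x * a ∈ J := by
    obtain ⟨j, hj, y, hy, hjy⟩ := Submodule.mem_sup.1 (hd n i k)
    obtain ⟨a, rfl⟩ := Ideal.mem_span_singleton'.1 hy
    exact ⟨a, by rw [← hjy]; simpa [mul_comm] using hj⟩
  choose t ht using hdt
  have hsq (n v) : matrixAct (Q ⧸ J) (d n) (matrixAct (Q ⧸ J) (d (n + 1)) v) =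
      x • matrixAct (Q ⧸ J) (Matrix.of (t n)) v := by
    rw [← matrixAct_mul, ← sub_eq_zero, ← LinearMap.smul_apply, ← map_smul,
      ← LinearMap.sub_apply, ← map_sub, matrixAct_eq_zero_of_forall_mem
      (Ideal.annihilator_quotient (I := J)).ge (by simpa using ht n), LinearMap.zero_apply]
  have hcone (n) : ∀ i k, (twistedCone d x (fun n => Matrix.of (t n)) n *
      twistedCone d x (fun n => Matrix.of (t n)) (n + 1)) i k ∈ J :=
    forall_mem_of_matrixAct_quotient_eq_zero <| LinearMap.ext fun v => by
      rw [matrixAct_mul, matrixAct_twistedCone_sq hx hsq, LinearMap.zero_apply]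
  refine HomologyEventuallyNull.of_twistedCone
    (π := Submodule.factor (le_sup_left : J ≤ J ⊔ Ideal.span {x})) (ψ := LinearMap.id)
    (Submodule.factor_surjective _) exists_smul_eq_of_factor_eq_zero hx ?_ hsq ?_
  · exact Module.mem_annihilator.1
      (Ideal.annihilator_quotient.ge (Ideal.mem_sup_right (Ideal.mem_span_singleton_self x)))
  · exact (h _ _ hcone (hW.twistedCone_of_smul_eq_zero hxW fun n v => by
      rw [← matrixAct_mul, matrixAct_eq_zero_of_forall_mem hJ (hcone n),
        LinearMap.zero_apply])).comp_left
        (Submodule.factor (le_sup_left : J ≤ J ⊔ Ideal.span {x}))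

theorem exists_linearMap_residueField_apply_eq_one [IsLocalRing Q] [Module.Finite Q W]
    [Nontrivial W] : ∃ (ψ : W →ₗ[Q] Q ⧸ maximalIdeal Q) (w : W), ψ w = 1 := by
  obtain ⟨V, hV, -⟩ := (eq_top_or_exists_le_coatom (⊥ : Submodule Q W)).resolve_left bot_ne_top
  have : IsSimpleModule Q (W ⧸ V) := isSimpleModule_iff_isCoatom.2 hV
  obtain ⟨I, hI, ⟨e⟩⟩ := isSimpleModule_iff_quot_maximal.1 this
  obtain rfl := IsLocalRing.eq_maximalIdeal hI
  obtain ⟨w, hw⟩ := V.mkQ_surjective (e.symm 1)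
  exact ⟨e.toLinearMap ∘ₗ V.mkQ, w, (congrArg e hw).trans (e.apply_symm_apply 1)⟩

theorem HomologyEventuallyNull.factor_maximalIdeal [IsLocalRing Q] [Module.Finite Q W]
    [Nontrivial W] {ι : ℕ → Type*} [∀ n, Fintype (ι n)] {d : ∀ n, Matrix (ι n) (ι (n + 1)) Q}
    (hd : EventuallyAcyclic W d) :
    HomologyEventuallyNull
      (Submodule.factor (bot_le : (⊥ : Ideal Q) ≤ maximalIdeal Q)) d := by
  obtain ⟨ψ, w, hψ⟩ := exists_linearMap_residueField_apply_eq_one (Q := Q) (W := W)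
  let φ : (Q ⧸ (⊥ : Ideal Q)) →ₗ[Q] W :=
    (⊥ : Ideal Q).liftQ (LinearMap.toSpanSingleton Q W w) bot_le
  convert (hd.comp_left ψ).comp_right φ
  ext
  exact hψ.symm.trans (congrArg ψ (one_smul Q w).symm)

theorem isWeaklyRegular_concat_iff {xs : List Q} {x : Q} :
    IsWeaklyRegular Q (xs ++ [x]) ↔
      IsWeaklyRegular Q xs ∧ IsSMulRegular (Q ⧸ Ideal.ofList xs) x := by
  rw [isWeaklyRegular_append_iff, isWeaklyRegular_singleton_iff, smul_eq_mul, Ideal.mul_top]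

theorem HomologyEventuallyNull.factor_ofList [IsLocalRing Q] [Module.Finite Q W] [Nontrivial W]
    {xs : List Q} (hxs : IsWeaklyRegular Q xs) (hle : Ideal.ofList xs ≤ maximalIdeal Q)
    {ι : ℕ → Type*} [∀ n, Fintype (ι n)] {d : ∀ n, Matrix (ι n) (ι (n + 1)) Q}
    (hd : ∀ n, d n * d (n + 1) = 0) (hW : EventuallyAcyclic W d) :
    HomologyEventuallyNull (Submodule.factor hle) d := by
  induction xs using List.reverseRecOn generalizing ι d with
  | nil =>
    revert hle
    rw [Ideal.ofList_nil]
    exact fun _ => .factor_maximalIdeal hW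
  | append_singleton xs x ih =>
    obtain ⟨hxs, hx⟩ := isWeaklyRegular_concat_iff.1 hxs
    revert hle
    rw [Ideal.ofList_append, Ideal.ofList_singleton]
    intro hle
    have hcone (n) : twistedCone d x 0 n * twistedCone d x 0 (n + 1) = 0 := by
      classical
      rw [twistedCone, twistedCone, Matrix.fromBlocks_multiply, ← Matrix.fromBlocks_zero]
      congr 1 <;> simp [hd]
    have hnull := ih hxs (le_sup_left.trans hle) hcone (hW.cone x)
    rw [← Submodule.factor_comp le_sup_left hle] at hnull
    refine of_twistedCone (Submodule.factor_surjective _) exists_smul_eq_of_factor_eq_zero hx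
      ?_ ?_ hnull
    · exact Module.mem_annihilator.1 (Ideal.annihilator_quotient.ge
        (hle (Ideal.mem_sup_right (Ideal.mem_span_singleton_self x))))
    · intro n v
      rw [← matrixAct_mul, hd]
      simp

theorem detectsEventualAcyclicity_bot [IsLocalRing Q] [Module.Finite Q W] [Nontrivial W]
    {xs : List Q} (hxs : IsWeaklyRegular Q xs) (hm : Ideal.ofList xs = maximalIdeal Q) :
    DetectsEventualAcyclicity W (⊥ : Ideal Q) := by
  intro ι _ d hd hW
  classical
  replace hd (n) : d n * d (n + 1) = 0 := Matrix.ext (hd n)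
  have hk : HomologyEventuallyNull (Submodule.factor hm.le) d := .factor_ofList hxs hm.le hd hW
  have hd' (n) (V : Type _) [AddCommGroup V] [Module Q V] (v : ι (n + 2) → V) :
      matrixAct V (d n) (matrixAct V (d (n + 1)) v) = 0 := by
    rw [← matrixAct_mul, hd, map_zero, LinearMap.zero_apply]
  have hk : EventuallyAcyclic (Q ⧸ maximalIdeal Q) d := by
    convert hk.comp_right (Submodule.factor hm.ge)
    ext
    rfl
  have hQ : EventuallyAcyclic Q d := by
    filter_upwards [hk] with n hn
    have hexact : Function.Exact (matrixAct Q (d (n + 1))) (matrixAct Q (d n)) := by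
      refine exact_of_exact_lTensor_residueField (LinearMap.ext (hd' n Q))
        ((exact_lTensor_matrixAct_iff _ _ _).2 fun v => ⟨hn v, ?_⟩)
      rintro ⟨w, rfl⟩
      exact hd' n _ w
    exact fun v => (hexact v).1
  convert (hQ.comp_left (Submodule.mkQ ⊥)).comp_right
    (Submodule.quotEquivOfEqBot (⊥ : Ideal Q) rfl).toLinearMap
  ext
  rfl

theorem detectsEventualAcyclicity_ofList [IsLocalRing Q] [Module.Finite Q W] [Nontrivial W]
    {xs : List Q} (hxs : IsWeaklyRegular Q xs) (hm : Ideal.ofList xs = maximalIdeal Q)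
    {fs : List Q} (hfs : IsWeaklyRegular Q fs) (hW : Ideal.ofList fs ≤ Module.annihilator Q W) :
    DetectsEventualAcyclicity W (Ideal.ofList fs) := by
  induction fs using List.reverseRecOn with
  | nil =>
    rw [Ideal.ofList_nil]
    exact detectsEventualAcyclicity_bot hxs hm
  | append_singleton fs f ih =>
    obtain ⟨hfs, hf⟩ := isWeaklyRegular_concat_iff.1 hfs
    rw [Ideal.ofList_append, Ideal.ofList_singleton] at hW ⊢
    obtain ⟨hW, hfW⟩ := sup_le_iff.1 hW
    exact (ih hfs hW).sup_span hf hW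
      (Module.mem_annihilator.1 (hfW (Ideal.mem_span_singleton_self f)))

end Amplitude

section Transfer

open Filter RingTheory.Sequence IsLocalRing TensorProduct

theorem exact_rTensor_iff_matrixAct_toMatrix' {R : Type*} [CommRing R] {l m n : Type*}
    [Finite l] [Fintype m] [Fintype n] [DecidableEq m] [DecidableEq n]
    (W : Type*) [AddCommGroup W] [Module R W] (f : (m → R) →ₗ[R] (l → R))
    (g : (n → R) →ₗ[R] (m → R)) :
    Function.Exact (g.rTensor W) (f.rTensor W) ↔
      Function.Exact (matrixAct W (LinearMap.toMatrix' g))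
        (matrixAct W (LinearMap.toMatrix' f)) := by
  rw [← exact_lTensor_matrixAct_iff, matrixAct_toMatrix', matrixAct_toMatrix']
  exact (Function.Exact.iff_of_ladder_linearEquiv (LinearMap.lTensor_comp_comm g)
    (LinearMap.lTensor_comp_comm f)).symm

variable {Q : Type*} [CommRing Q] {W : Type*} [AddCommGroup W] [Module Q W]

theorem DetectsEventualAcyclicity.eventually_exact {J : Ideal Q} [Module (Q ⧸ J) W]
    [IsScalarTower Q (Q ⧸ J) W] (h : DetectsEventualAcyclicity W J) {s : ℕ → ℕ}
    {f : ∀ n, (Fin (s (n + 1)) → Q ⧸ J) →ₗ[Q ⧸ J] (Fin (s n) → Q ⧸ J)}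
    (hf : ∀ n, f n ∘ₗ f (n + 1) = 0)
    (hW : ∀ᶠ n in atTop, Function.Exact ((f (n + 1)).rTensor W) ((f n).rTensor W)) :
    ∀ᶠ n in atTop, Function.Exact (f (n + 1)) (f n) := by
  have hlift (n) : ∃ D : Matrix (Fin (s n)) (Fin (s (n + 1))) Q,
      D.map (algebraMap Q (Q ⧸ J)) = LinearMap.toMatrix' (f n) := by
    choose D hD using fun i k => Ideal.Quotient.mk_surjective (LinearMap.toMatrix' (f n) i k)
    exact ⟨Matrix.of D, Matrix.ext hD⟩
  choose D hD using hlift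
  have hDW (n) (v : Fin (s (n + 1)) → W) :
      matrixAct W (D n) v = matrixAct W (LinearMap.toMatrix' (f n)) v := by
    rw [← hD, matrixAct_map_algebraMap]
  have hDf (n) (v : Fin (s (n + 1)) → Q ⧸ J) : matrixAct (Q ⧸ J) (D n) v = f n v := by
    rw [← matrixAct_map_algebraMap (S := Q ⧸ J), hD, matrixAct_toMatrix']
  have hDJ (n) : ∀ i k, (D n * D (n + 1)) i k ∈ J :=
    forall_mem_of_matrixAct_quotient_eq_zero <| LinearMap.ext fun v => by
      rw [matrixAct_mul, hDf, hDf]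
      exact LinearMap.congr_fun (hf n) v
  have hacyclic : EventuallyAcyclic W D := by
    filter_upwards [hW] with n hn v hv
    rw [exact_rTensor_iff_matrixAct_toMatrix'] at hn
    obtain ⟨w, hw⟩ := (hn v).1 (by rwa [← hDW])
    exact ⟨w, by rw [hDW, hw]; rfl⟩
  filter_upwards [h _ D hDJ hacyclic] with n hn v
  constructor
  · intro hv
    obtain ⟨w, hw⟩ := hn v (by rwa [hDf])
    exact ⟨w, by rwa [hDf] at hw⟩
  · rintro ⟨w, rfl⟩
    exact LinearMap.congr_fun (hf n) w

end Transfer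

section RegularLocal

open IsLocalRing RingTheory.Sequence

variable {Q : Type*} [CommRing Q]

theorem exists_isPrime_natCast_le_ringKrullDim_quotient {n : ℕ} (h : n ≤ ringKrullDim Q) :
    ∃ p : Ideal Q, p.IsPrime ∧ n ≤ ringKrullDim (Q ⧸ p) := by
  obtain ⟨l, rfl⟩ := Order.le_krullDim_iff.1 h
  refine ⟨l.head.asIdeal, l.head.isPrime, ?_⟩
  rw [ringKrullDim_quotient]
  exact Order.le_krullDim_iff.2 ⟨⟨l.length, fun i => ⟨l i, LTSeries.head_le l i⟩, l.step⟩, rfl⟩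

variable [IsLocalRing Q] [IsNoetherianRing Q]

theorem ringKrullDim_le_length_of_ofList_eq_maximalIdeal {xs : List Q}
    (hm : Ideal.ofList xs = maximalIdeal Q) : ringKrullDim Q ≤ xs.length := by
  classical
  have hspan : (maximalIdeal Q).spanFinrank ≤ (xs.toFinset : Set Q).ncard := by
    rw [← hm, Ideal.ofList, ← List.coe_toFinset]
    exact Submodule.spanFinrank_span_le_ncard_of_finite (Finset.finite_toSet _)
  rw [Set.ncard_coe_finset] at hspan
  exact (ringKrullDim_le_spanFinrank_maximalIdeal Q).trans
    (mod_cast hspan.trans xs.toFinset_card_le)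

theorem natCast_le_ringKrullDim_quotient_span_singleton {x : Q} (hx : x ∈ maximalIdeal Q) {n : ℕ}
    (h : (n + 1 : ℕ) ≤ ringKrullDim Q) : n ≤ ringKrullDim (Q ⧸ Ideal.span {x}) := by
  have hdim := h.trans (ringKrullDim_le_ringKrullDim_quotient_add_card ({x} : Finset Q)
    (by simpa [ringJacobson_eq_maximalIdeal] using hx))
  rwa [Finset.coe_singleton, Finset.card_singleton, Nat.cast_one, Nat.cast_succ,
    ENat.WithBot.add_le_add_one_right_iff] at hdim

/-- Otherwise some `y ∈ p` would be a nonzero element of the domain `Q ⧸ (x)`, and then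
`dim Q ⧸ p ≤ dim Q ⧸ (p + (x)) + 1 ≤ dim Q ⧸ (x, y) + 1 ≤ dim Q ⧸ (x)`. -/
theorem le_span_singleton_of_ringKrullDim_quotient {x : Q} (hx : x ∈ maximalIdeal Q) {n : ℕ}
    [IsDomain (Q ⧸ Ideal.span {x})] (hle : ringKrullDim (Q ⧸ Ideal.span {x}) ≤ n)
    {p : Ideal Q} [p.IsPrime] (hp : (n + 1 : ℕ) ≤ ringKrullDim (Q ⧸ p)) :
    p ≤ Ideal.span {x} := by
  have : IsLocalRing (Q ⧸ p) := .of_surjective' _ Ideal.Quotient.mk_surjective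
  have : IsLocalHom (Ideal.Quotient.mk p) := .of_surjective _ Ideal.Quotient.mk_surjective
  have hdim : n ≤ ringKrullDim (Q ⧸ p ⊔ Ideal.span {x}) := by
    rw [← ringKrullDim_eq_of_ringEquiv (DoubleQuot.quotQuotEquivQuotSup p (Ideal.span {x})),
      Ideal.map_span, Set.image_singleton]
    exact natCast_le_ringKrullDim_quotient_span_singleton (map_mem_nonunits_iff _ x |>.2 hx) hp
  intro y hy
  by_contra hyx
  have hsucc := ringKrullDim_succ_le_of_surjective
    (Ideal.Quotient.factor (le_sup_right : Ideal.span {x} ≤ p ⊔ Ideal.span {x}))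
    (Ideal.Quotient.factor_surjective _) (r := Ideal.Quotient.mk _ y)
    (mem_nonZeroDivisors_of_ne_zero (by rwa [Ne, Ideal.Quotient.eq_zero_iff_mem]))
    (by simpa using! Ideal.Quotient.eq_zero_iff_mem.2 (Ideal.mem_sup_left hy))
  have h := (add_le_add_left hdim 1).trans (hsucc.trans hle)
  norm_cast at h
  omega

theorem eq_bot_of_isPrime_of_le_span_singleton {x : Q} (hx : x ∈ maximalIdeal Q)
    {p : Ideal Q} (hp : p.IsPrime) (hpx : p ≤ Ideal.span {x}) (hxp : x ∉ p) : p = ⊥ := by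
  refine Submodule.eq_bot_of_le_smul_of_le_jacobson_bot (Ideal.span {x}) p
    (IsNoetherian.noetherian p) (fun y hy => ?_) ?_
  · obtain ⟨c, rfl⟩ := Ideal.mem_span_singleton.1 (hpx hy)
    exact Submodule.smul_mem_smul (Ideal.mem_span_singleton_self x)
      ((hp.mem_or_mem hy).resolve_left hxp)
  · rwa [jacobson_eq_maximalIdeal _ bot_ne_top, Ideal.span_singleton_le_iff_mem]

theorem isDomain_and_ne_zero_of_ringKrullDim_quotient_span_singleton {x : Q}
    (hx : x ∈ maximalIdeal Q) {n : ℕ} [IsDomain (Q ⧸ Ideal.span {x})]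
    (hle : ringKrullDim (Q ⧸ Ideal.span {x}) ≤ n) (hdim : (n + 1 : ℕ) ≤ ringKrullDim Q) :
    IsDomain Q ∧ x ≠ 0 := by
  obtain ⟨p, hp, hpdim⟩ := exists_isPrime_natCast_le_ringKrullDim_quotient hdim
  have hxp : x ∉ p := fun hxp => by
    have h := hpdim.trans ((ringKrullDim_le_of_surjective
      (Ideal.Quotient.factor ((Ideal.span_singleton_le_iff_mem p).2 hxp))
      (Ideal.Quotient.factor_surjective _)).trans hle)
    norm_cast at h
    omega
  obtain rfl := eq_bot_of_isPrime_of_le_span_singleton hx hp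
    (le_span_singleton_of_ringKrullDim_quotient hx hle hpdim) hxp
  exact ⟨IsDomain.of_bot_isPrime Q, fun h => hxp (by simp [h])⟩

theorem isDomain_and_isWeaklyRegular_of_ofList_eq_maximalIdeal {xs : List Q}
    (hm : Ideal.ofList xs = maximalIdeal Q) (hdim : xs.length ≤ ringKrullDim Q) :
    IsDomain Q ∧ IsWeaklyRegular Q xs := by
  obtain ⟨n, hn⟩ : ∃ n, xs.length = n := ⟨_, rfl⟩
  induction n generalizing Q with
  | zero =>
    obtain rfl := List.length_eq_zero_iff.1 hn
    rw [Ideal.ofList_nil] at hm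
    exact ⟨(isField_iff_maximalIdeal_eq.2 hm.symm).isDomain, IsWeaklyRegular.nil Q Q⟩
  | succ n ih =>
    obtain ⟨x, xs, rfl⟩ := List.exists_cons_of_length_eq_add_one hn
    rw [hn] at hdim
    have hx : x ∈ maximalIdeal Q := hm ▸ Ideal.subset_span (by simp)
    have hxm : Ideal.span {x} ≤ maximalIdeal Q := (Ideal.span_singleton_le_iff_mem _).2 hx
    have : Nontrivial (Q ⧸ Ideal.span {x}) :=
      Ideal.Quotient.nontrivial_iff.2 (ne_top_of_le_ne_top Ideal.IsPrime.ne_top' hxm)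
    have : IsLocalRing (Q ⧸ Ideal.span {x}) := .of_surjective' _ Ideal.Quotient.mk_surjective
    let ys := xs.map (Ideal.Quotient.mk (Ideal.span {x}))
    have hys : ys.length = n := by simpa [ys] using hn
    have hm' : Ideal.ofList ys = maximalIdeal (Q ⧸ Ideal.span {x}) := by
      rw [← map_maximalIdeal_of_surjective _ Ideal.Quotient.mk_surjective, ← hm,
        Ideal.ofList_cons, Ideal.map_sup, Ideal.map_quotient_self, bot_sup_eq, Ideal.map_ofList]
    obtain ⟨_, hreg⟩ := ih hm'
      (hys ▸ natCast_le_ringKrullDim_quotient_span_singleton hx hdim) hys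
    obtain ⟨_, hx0⟩ := isDomain_and_ne_zero_of_ringKrullDim_quotient_span_singleton hx
      (hys ▸ ringKrullDim_le_length_of_ofList_eq_maximalIdeal hm') hdim
    refine ⟨‹_›, IsWeaklyRegular.cons (IsSMulRegular.of_ne_zero hx0) ?_⟩
    have e : QuotSMulTop x Q ≃ₗ[Q] Q ⧸ Ideal.span {x} :=
      Submodule.quotEquivOfEq _ _ (by simp [← Submodule.ideal_span_singleton_smul])
    rw [e.isWeaklyRegular_congr]
    exact (isWeaklyRegular_map_algebraMap_iff (Q ⧸ Ideal.span {x}) _ xs).1 hreg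

end RegularLocal

section LocalCompleteIntersection

open Filter IsLocalRing RingTheory.Sequence

variable {Q : Type u} [CommRing Q] [IsLocalRing Q]

theorem IsRegularLocal.exists_isWeaklyRegular (hQ : IsRegularLocal Q) :
    ∃ xs : List Q, IsWeaklyRegular Q xs ∧ Ideal.ofList xs = maximalIdeal Q := by
  obtain ⟨_, s, hs, hdim⟩ := hQ
  have hm : Ideal.ofList s.toList = maximalIdeal Q := by simp [Ideal.ofList, ← hs]
  exact ⟨s.toList, (isDomain_and_isWeaklyRegular_of_ofList_eq_maximalIdeal hm
    (by rw [Finset.length_toList, hdim])).2, hm⟩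

theorem IsRegularLocal.eventually_exact_of_rTensor (hQ : IsRegularLocal Q) {fs : List Q}
    (hfs : IsWeaklyRegular Q fs) {W : Type*} [AddCommGroup W] [Module (Q ⧸ Ideal.ofList fs) W]
    [Module.Finite (Q ⧸ Ideal.ofList fs) W] [Nontrivial W] {s : ℕ → ℕ}
    {f : ∀ n, (Fin (s (n + 1)) → Q ⧸ Ideal.ofList fs) →ₗ[Q ⧸ Ideal.ofList fs]
      (Fin (s n) → Q ⧸ Ideal.ofList fs)}
    (hf : ∀ n, f n ∘ₗ f (n + 1) = 0)
    (hW : ∀ᶠ n in atTop, Function.Exact ((f (n + 1)).rTensor W) ((f n).rTensor W)) :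
    ∀ᶠ n in atTop, Function.Exact (f (n + 1)) (f n) := by
  obtain ⟨xs, hxs, hm⟩ := hQ.exists_isWeaklyRegular
  let _ : Module Q W := Module.compHom W (algebraMap Q (Q ⧸ Ideal.ofList fs))
  have : IsScalarTower Q (Q ⧸ Ideal.ofList fs) W := IsScalarTower.of_algebraMap_smul fun _ _ => rfl
  have : Module.Finite Q W := .trans (Q ⧸ Ideal.ofList fs) W
  have hann : Ideal.ofList fs ≤ Module.annihilator Q W := fun a ha =>
    Module.mem_annihilator.2 fun w => by
      rw [← algebraMap_smul (Q ⧸ Ideal.ofList fs) a w, Ideal.Quotient.algebraMap_eq,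
        Ideal.Quotient.eq_zero_iff_mem.2 ha, zero_smul]
  exact (detectsEventualAcyclicity_ofList hxs hm hfs hann).eventually_exact hf hW

end LocalCompleteIntersection

section Resolution

variable {R : Type u} [CommRing R] {V : Type*} [AddCommGroup V] [Module R V]

/-- The sequence `⋯ → G 2 → G 1 → G 0 → V → 0` with differentials `φ` and augmentation `q` is
exact. Freeness, projectivity or flatness of the `G n` is assumed separately. -/
structure IsResolution {G : ℕ → Type*} [∀ n, AddCommGroup (G n)] [∀ n, Module R (G n)]
    (φ : ∀ n, G (n + 1) →ₗ[R] G n) (q : G 0 →ₗ[R] V) : Prop where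
  surjective : Function.Surjective q
  exact_zero : Function.Exact (φ 0) q
  exact_succ (n : ℕ) : Function.Exact (φ (n + 1)) (φ n)

variable [IsNoetherianRing R]

theorem exists_exact_fin {a : ℕ} (g : (Fin a → R) →ₗ[R] V) :
    ∃ (b : ℕ) (f : (Fin b → R) →ₗ[R] (Fin a → R)), Function.Exact f g := by
  obtain ⟨b, f, hf⟩ := Module.Finite.exists_fin' R (LinearMap.ker g)
  refine ⟨b, (LinearMap.ker g).subtype ∘ₗ f, LinearMap.exact_iff.2 ?_⟩
  rw [LinearMap.range_comp, LinearMap.range_eq_top.2 hf, Submodule.map_top, Submodule.range_subtype]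

variable (V) in
theorem exists_isResolution_finite_free [Module.Finite R V] :
    ∃ (G : ℕ → Type u) (_ : ∀ n, AddCommGroup (G n)) (_ : ∀ n, Module R (G n))
      (_ : ∀ n, Module.Free R (G n)) (_ : ∀ n, Module.Finite R (G n))
      (φ : ∀ n, G (n + 1) →ₗ[R] G n) (q : G 0 →ₗ[R] V), IsResolution φ q := by
  obtain ⟨a, q, hq⟩ := Module.Finite.exists_fin' R V
  obtain ⟨b, f, hf⟩ := exists_exact_fin q
  choose rank map exact_map using fun T : Σ a b : ℕ, (Fin b → R) →ₗ[R] (Fin a → R) =>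
    exists_exact_fin T.2.2
  let S (n : ℕ) : Σ a b : ℕ, (Fin b → R) →ₗ[R] (Fin a → R) :=
    Nat.rec ⟨a, b, f⟩ (fun _ T => ⟨T.2.1, rank T, map T⟩) n
  exact ⟨fun n => Fin (S n).1 → R, inferInstance, inferInstance, inferInstance, inferInstance,
    fun n => (S n).2.2, q, hq, hf, fun n => exact_map (S n)⟩

end Resolution

section AcyclicCover

variable {R : Type*} [CommRing R] {C : ℕ → Type*} [∀ n, AddCommGroup (C n)]
  [∀ n, Module R (C n)]

/-- A chain map `π` from a complex `(X, d)` to `(C, δ)` which is surjective with acyclic kernel.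
Both conditions are encoded by lifting: a cycle `z` and a chain `c` with `π z = δ c` come from a
common chain of `X`. -/
structure IsAcyclicCover {X : ℕ → Type*} [∀ n, AddCommGroup (X n)] [∀ n, Module R (X n)]
    (d : ∀ n, X (n + 1) →ₗ[R] X n) (δ : ∀ n, C (n + 1) →ₗ[R] C n)
    (π : ∀ n, X n →ₗ[R] C n) : Prop where
  comp_eq_zero (n : ℕ) : d n ∘ₗ d (n + 1) = 0
  comm (n : ℕ) : π n ∘ₗ d n = δ n ∘ₗ π (n + 1)
  surjective_zero : Function.Surjective (π 0)
  exists_lift_zero (z : X 0) (c : C 1) (h : π 0 z = δ 0 c) : ∃ w, d 0 w = z ∧ π 1 w = c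
  exists_lift (n : ℕ) (z : X (n + 1)) (c : C (n + 2)) (hz : d n z = 0)
    (h : π (n + 1) z = δ (n + 1) c) : ∃ w, d (n + 1) w = z ∧ π (n + 2) w = c

theorem exists_fin_cover_pullback [IsNoetherianRing R] {V V' : Type*} [AddCommGroup V]
    [Module R V] [AddCommGroup V'] [Module R V'] [Module.Finite R V'] {a : ℕ}
    (π : (Fin a → R) →ₗ[R] V) (Z : Submodule R (Fin a → R)) (δ : V' →ₗ[R] V) :
    ∃ (b : ℕ) (π' : (Fin b → R) →ₗ[R] V') (d : (Fin b → R) →ₗ[R] (Fin a → R)),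
      (∀ w, d w ∈ Z) ∧ π ∘ₗ d = δ ∘ₗ π' ∧
        ∀ z ∈ Z, ∀ c, π z = δ c → ∃ w, d w = z ∧ π' w = c := by
  let P : Submodule R ((Fin a → R) × V') := Z.comap (LinearMap.fst R _ _) ⊓
    LinearMap.eqLocus (π ∘ₗ LinearMap.fst R _ _) (δ ∘ₗ LinearMap.snd R _ _)
  obtain ⟨b, f, hf⟩ := Module.Finite.exists_fin' R P
  refine ⟨b, LinearMap.snd R _ _ ∘ₗ P.subtype ∘ₗ f, LinearMap.fst R _ _ ∘ₗ P.subtype ∘ₗ f,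
    fun w => (f w).2.1, LinearMap.ext fun w => (f w).2.2, fun z hz c h => ?_⟩
  obtain ⟨w, hw⟩ := hf ⟨(z, c), hz, h⟩
  exact ⟨w, by simp [hw], by simp [hw]⟩

theorem exists_isAcyclicCover_fin [IsNoetherianRing R] [∀ n, Module.Finite R (C n)]
    (δ : ∀ n, C (n + 1) →ₗ[R] C n) :
    ∃ (s : ℕ → ℕ) (d : ∀ n, (Fin (s (n + 1)) → R) →ₗ[R] (Fin (s n) → R))
      (π : ∀ n, (Fin (s n) → R) →ₗ[R] C n),
      IsAcyclicCover (X := fun n => Fin (s n) → R) d δ π := by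
  let Stage (n : ℕ) := Σ a : ℕ, ((Fin a → R) →ₗ[R] C n) × Submodule R (Fin a → R)
  choose rank cover diff mem_cycles comm exists_lift using fun n (T : Stage n) =>
    exists_fin_cover_pullback T.2.1 T.2.2 (δ n)
  obtain ⟨a, π₀, hπ₀⟩ := Module.Finite.exists_fin' R (C 0)
  let S (n : ℕ) : Stage n :=
    Nat.rec ⟨a, π₀, ⊤⟩ (fun n T => ⟨rank n T, cover n T, LinearMap.ker (diff n T)⟩) n
  exact ⟨fun n => (S n).1, fun n => diff n (S n), fun n => (S n).2.1,
    { comp_eq_zero := fun n => LinearMap.ext (mem_cycles (n + 1) (S (n + 1)))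
      comm := fun n => comm n (S n)
      surjective_zero := hπ₀
      exists_lift_zero := fun z => exists_lift 0 (S 0) z trivial
      exists_lift := fun n z c hz => exists_lift (n + 1) (S (n + 1)) z hz c }⟩

namespace IsAcyclicCover

variable {X : ℕ → Type*} [∀ n, AddCommGroup (X n)] [∀ n, Module R (X n)]
  {d : ∀ n, X (n + 1) →ₗ[R] X n} {δ : ∀ n, C (n + 1) →ₗ[R] C n} {π : ∀ n, X n →ₗ[R] C n}

theorem exists_cycle_lift (h : IsAcyclicCover d δ π) {n : ℕ} {c : C (n + 1)} (hc : δ n c = 0) :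
    ∃ z, d n z = 0 ∧ π (n + 1) z = c := by
  cases n with
  | zero => exact h.exists_lift_zero 0 c (by simp [hc])
  | succ n => exact h.exists_lift n 0 c (by simp) (by simp [hc])

theorem surjective (h : IsAcyclicCover d δ π) (hδ : ∀ n, δ n ∘ₗ δ (n + 1) = 0) :
    ∀ n, Function.Surjective (π n)
  | 0 => h.surjective_zero
  | 1 => fun c =>
    have ⟨z, hz⟩ := h.surjective_zero (δ 0 c)
    have ⟨w, _, hw⟩ := h.exists_lift_zero z c hz
    ⟨w, hw⟩
  | n + 2 => fun c =>
    have ⟨z, hz, hzc⟩ := h.exists_cycle_lift (LinearMap.congr_fun (hδ n) c)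
    have ⟨w, _, hw⟩ := h.exists_lift n z c hz hzc
    ⟨w, hw⟩

theorem exact_of_exact (h : IsAcyclicCover d δ π) (hδ : ∀ n, δ n ∘ₗ δ (n + 1) = 0) {n : ℕ}
    (hX : Function.Exact (d (n + 1)) (d n)) : Function.Exact (δ (n + 1)) (δ n) := by
  refine LinearMap.exact_of_comp_eq_zero_of_ker_le_range (hδ n) fun c hc => ?_
  obtain ⟨z, hz, rfl⟩ := h.exists_cycle_lift hc
  obtain ⟨y, rfl⟩ := (hX z).1 hz
  exact ⟨π (n + 2) y, (LinearMap.congr_fun (h.comm (n + 1)) y).symm⟩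

/-- The differential of the kernel of an acyclic cover. -/
def kerMap (h : IsAcyclicCover d δ π) (n : ℕ) :
    LinearMap.ker (π (n + 1)) →ₗ[R] LinearMap.ker (π n) :=
  (d n).restrict fun x hx => by
    rw [LinearMap.mem_ker, ← LinearMap.comp_apply, h.comm, LinearMap.comp_apply,
      LinearMap.mem_ker.1 hx, map_zero]

theorem kerMap_zero_surjective (h : IsAcyclicCover d δ π) :
    Function.Surjective (h.kerMap 0) := fun ⟨z, hz⟩ =>
  have ⟨w, hw, hw'⟩ := h.exists_lift_zero z 0 (by rwa [map_zero])
  ⟨⟨w, hw'⟩, Subtype.ext hw⟩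

theorem kerMap_exact (h : IsAcyclicCover d δ π) (n : ℕ) :
    Function.Exact (h.kerMap (n + 1)) (h.kerMap n) := by
  refine LinearMap.exact_of_comp_eq_zero_of_ker_le_range
    (LinearMap.ext fun x => Subtype.ext (LinearMap.congr_fun (h.comp_eq_zero n) x.1)) ?_
  rintro ⟨z, hz⟩ hdz
  obtain ⟨w, hw, hw'⟩ := h.exists_lift n z 0 (congrArg Subtype.val hdz) (by rwa [map_zero])
  exact ⟨⟨w, hw'⟩, Subtype.ext hw⟩

end IsAcyclicCover

end AcyclicCover

section Tor

open CategoryTheory Limits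

variable {R : Type u} [CommRing R] {G : ℕ → Type u} [∀ n, AddCommGroup (G n)]
  [∀ n, Module R (G n)] {φ : ∀ n, G (n + 1) →ₗ[R] G n} {V : ModuleCat.{u} R} {q : G 0 →ₗ[R] V}

namespace IsResolution

/-- The chain complex of modules underlying a resolution. -/
noncomputable def chainComplex (h : IsResolution φ q) : ChainComplex (ModuleCat.{u} R) ℕ :=
  ChainComplex.of (fun n => ModuleCat.of R (G n)) (fun n => ModuleCat.ofHom (φ n)) fun n =>
    ModuleCat.hom_ext (h.exact_succ n).linearMap_comp_eq_zero

theorem chainComplex_d (h : IsResolution φ q) (n : ℕ) :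
    h.chainComplex.d (n + 1) n = ModuleCat.ofHom (φ n) :=
  ChainComplex.of_d (fun n => ModuleCat.of R (G n)) (fun n => ModuleCat.ofHom (φ n)) n

theorem chainComplex_d_comp_augmentation (h : IsResolution φ q) :
    h.chainComplex.d 1 0 ≫ (ModuleCat.ofHom q : h.chainComplex.X 0 ⟶ V) = 0 := by
  rw [chainComplex_d]
  exact ModuleCat.hom_ext h.exact_zero.linearMap_comp_eq_zero

/-- The augmentation of a resolution, as a map of chain complexes to its target in degree `0`. -/
noncomputable def augmentation (h : IsResolution φ q) :
    h.chainComplex ⟶ (ChainComplex.single₀ (ModuleCat.{u} R)).obj V :=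
  (h.chainComplex.toSingle₀Equiv V).symm ⟨ModuleCat.ofHom q, h.chainComplex_d_comp_augmentation⟩

theorem quasiIsoAt_augmentation_zero (h : IsResolution φ q) : QuasiIsoAt h.augmentation 0 := by
  rw [ChainComplex.quasiIsoAt₀_iff, ShortComplex.quasiIso_iff_of_zeros' _ rfl rfl rfl]
  refine (ShortComplex.exact_and_epi_g_iff_of_iso
    (S₂ := ShortComplex.mk _ _ h.chainComplex_d_comp_augmentation) ?_).2 ⟨?_, ?_⟩
  · exact ShortComplex.isoMk (Iso.refl _) (Iso.refl _) (Iso.refl _)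
      ((Category.id_comp _).trans (Category.comp_id _).symm)
      ((Category.id_comp _).trans
        ((ChainComplex.toSingle₀Equiv_symm_apply_f_zero _
          h.chainComplex_d_comp_augmentation).symm.trans (Category.comp_id _).symm))
  · have exact_d : Function.Exact (h.chainComplex.d 1 0).hom q := by
      rw [chainComplex_d]
      exact h.exact_zero
    exact (ShortComplex.ShortExact.moduleCat_exact_iff_function_exact _).2 exact_d
  · exact (ModuleCat.epi_iff_surjective _).2 h.surjective

theorem quasiIsoAt_augmentation_succ (h : IsResolution φ q) (n : ℕ) :
    QuasiIsoAt h.augmentation (n + 1) := by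
  rw [quasiIsoAt_iff_exactAt' (hL := ChainComplex.exactAt_succ_single_obj ..),
    HomologicalComplex.exactAt_iff' _ (n + 2) (n + 1) n (by simp) (by simp),
    ShortComplex.ShortExact.moduleCat_exact_iff_function_exact]
  dsimp only [HomologicalComplex.sc', HomologicalComplex.shortComplexFunctor']
  rw [chainComplex_d, chainComplex_d]
  exact h.exact_succ n

/-- The projective resolution, in the sense of category theory, given by a resolution by
projective modules. -/
noncomputable def projectiveResolution [∀ n, Module.Projective R (G n)] (h : IsResolution φ q) :
    ProjectiveResolution V where
  complex := h.chainComplex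
  projective n := inferInstanceAs (Projective (ModuleCat.of R (G n)))
  π := h.augmentation
  quasiIso := ⟨fun
    | 0 => h.quasiIsoAt_augmentation_zero
    | n + 1 => h.quasiIsoAt_augmentation_succ n⟩

theorem isZero_tor_succ_iff [∀ n, Module.Projective R (G n)] (h : IsResolution φ q)
    (A : ModuleCat.{u} R) (n : ℕ) :
    IsZero (((Tor (ModuleCat.{u} R) (n + 1)).obj A).obj V) ↔
      Function.Exact ((φ (n + 1)).lTensor A) ((φ n).lTensor A) := by
  refine (h.projectiveResolution.isoLeftDerivedObj
    ((MonoidalCategory.tensoringLeft (ModuleCat.{u} R)).obj A) (n + 1)).isZero_iff.trans ?_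
  refine (HomologicalComplex.exactAt_iff_isZero_homology _ _).symm.trans ?_
  rw [HomologicalComplex.exactAt_iff' _ (n + 2) (n + 1) n (by simp) (by simp),
    ShortComplex.ShortExact.moduleCat_exact_iff_function_exact]
  dsimp only [projectiveResolution, HomologicalComplex.sc',
    HomologicalComplex.shortComplexFunctor', Functor.mapHomologicalComplex]
  rw [chainComplex_d, chainComplex_d]
  rfl

end IsResolution

end Tor

section ExactSequences

open TensorProduct

variable {R : Type*} [CommRing R]

theorem exact_middle_of_exact_of_exact {A₀ A₁ A₂ B₀ B₁ B₂ C₀ C₁ C₂ : Type*}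
    [AddCommGroup A₀] [Module R A₀] [AddCommGroup A₁] [Module R A₁] [AddCommGroup A₂] [Module R A₂]
    [AddCommGroup B₀] [Module R B₀] [AddCommGroup B₁] [Module R B₁] [AddCommGroup B₂] [Module R B₂]
    [AddCommGroup C₀] [Module R C₀] [AddCommGroup C₁] [Module R C₁] [AddCommGroup C₂] [Module R C₂]
    {a₁ : A₂ →ₗ[R] A₁} {a₀ : A₁ →ₗ[R] A₀} {b₁ : B₂ →ₗ[R] B₁} {b₀ : B₁ →ₗ[R] B₀}
    {c₁ : C₂ →ₗ[R] C₁} {c₀ : C₁ →ₗ[R] C₀} {i₀ : A₀ →ₗ[R] B₀} {i₁ : A₁ →ₗ[R] B₁}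
    {i₂ : A₂ →ₗ[R] B₂} {p₀ : B₀ →ₗ[R] C₀} {p₁ : B₁ →ₗ[R] C₁} {p₂ : B₂ →ₗ[R] C₂}
    (hia₀ : i₀ ∘ₗ a₀ = b₀ ∘ₗ i₁) (hia₁ : i₁ ∘ₗ a₁ = b₁ ∘ₗ i₂) (hpb₀ : p₀ ∘ₗ b₀ = c₀ ∘ₗ p₁)
    (hpb₁ : p₁ ∘ₗ b₁ = c₁ ∘ₗ p₂) (hb : b₀ ∘ₗ b₁ = 0) (hi₀ : Function.Injective i₀)
    (hip₁ : Function.Exact i₁ p₁) (hp₂ : Function.Surjective p₂) (ha : Function.Exact a₁ a₀)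
    (hc : Function.Exact c₁ c₀) : Function.Exact b₁ b₀ := by
  simp only [LinearMap.ext_iff, LinearMap.comp_apply, LinearMap.zero_apply] at *
  refine LinearMap.exact_of_comp_eq_zero_of_ker_le_range (LinearMap.ext hb) fun x hx => ?_
  obtain ⟨z, hz⟩ := (hc (p₁ x)).1 (by rw [← hpb₀, LinearMap.mem_ker.1 hx, map_zero])
  obtain ⟨y, rfl⟩ := hp₂ z
  obtain ⟨u, hu⟩ := (hip₁ (x - b₁ y)).1 (by rw [map_sub, hpb₁, hz, sub_self])
  obtain ⟨v, rfl⟩ := (ha u).1 <| hi₀ <| by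
    rw [hia₀, hu, map_sub, hb, LinearMap.mem_ker.1 hx, sub_zero, map_zero]
  exact ⟨i₂ v + y, by rw [map_add, ← hia₁, hu, sub_add_cancel]⟩

theorem exact_liftQ_mkQ {X Y : Type*} [AddCommGroup X] [Module R X] [AddCommGroup Y] [Module R Y]
    {p : Submodule R X} {f : X →ₗ[R] Y} (h : p ≤ LinearMap.ker f) :
    Function.Exact (p.liftQ f h) (LinearMap.range f).mkQ := LinearMap.exact_iff.2 <| by
  rw [Submodule.ker_mkQ, Submodule.range_liftQ]

theorem lTensor_rTensor_comm_apply {A B X Y : Type*} [AddCommGroup A] [Module R A]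
    [AddCommGroup B] [Module R B] [AddCommGroup X] [Module R X] [AddCommGroup Y] [Module R Y]
    (f : A →ₗ[R] B) (g : X →ₗ[R] Y) (z : A ⊗[R] X) :
    g.lTensor B (f.rTensor X z) = f.rTensor Y (g.lTensor A z) := by
  rw [← LinearMap.comp_apply, ← LinearMap.comp_apply, LinearMap.lTensor_comp_rTensor,
    LinearMap.rTensor_comp_lTensor]

theorem exact_lTensor_tensorProduct_iff {M P X Y Z : Type*} [AddCommGroup M] [Module R M]
    [AddCommGroup P] [Module R P] [AddCommGroup X] [Module R X] [AddCommGroup Y] [Module R Y]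
    [AddCommGroup Z] [Module R Z] {f : X →ₗ[R] Y} {g : Y →ₗ[R] Z} :
    Function.Exact (f.lTensor (M ⊗[R] P)) (g.lTensor (M ⊗[R] P)) ↔
      Function.Exact ((f.lTensor M).rTensor P) ((g.lTensor M).rTensor P) :=
  (Function.Exact.iff_of_ladder_linearEquiv (e₁ := TensorProduct.rightComm R M P X)
    (e₂ := TensorProduct.rightComm R M P Y) (e₃ := TensorProduct.rightComm R M P Z)
    (TensorProduct.ext_threefold fun _ _ _ => rfl)
    (TensorProduct.ext_threefold fun _ _ _ => rfl)).symm

theorem mem_range_lTensor_of_rTensor_mem_range {A B C X Y Z : Type*} [AddCommGroup A]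
    [Module R A] [AddCommGroup B] [Module R B] [AddCommGroup C] [Module R C] [AddCommGroup X]
    [Module R X] [AddCommGroup Y] [Module R Y] [AddCommGroup Z] [Module R Z] [Module.Flat R Z]
    {f : A →ₗ[R] B} {g : B →ₗ[R] C} {α : X →ₗ[R] Y} {β : Y →ₗ[R] Z}
    (hf : Function.Injective f) (hfg : Function.Exact f g) (hg : Function.Surjective g)
    (hβα : β ∘ₗ α = 0) (hC : Function.Exact (α.lTensor C) (β.lTensor C)) {z : A ⊗[R] Z}
    (hz : f.rTensor Z z ∈ LinearMap.range (β.lTensor B)) :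
    z ∈ LinearMap.range (β.lTensor A) := by
  obtain ⟨y, hy⟩ := hz
  have hgy : β.lTensor C (g.rTensor Y y) = 0 := by
    rw [lTensor_rTensor_comm_apply, hy]
    exact (rTensor_exact Z hfg hg).apply_apply_eq_zero z
  obtain ⟨c, hc⟩ := (hC _).1 hgy
  obtain ⟨b, rfl⟩ := LinearMap.rTensor_surjective X hg c
  obtain ⟨a, ha⟩ := (rTensor_exact Y hfg hg (y - α.lTensor B b)).1
    (by rw [map_sub, ← lTensor_rTensor_comm_apply, hc, sub_self])
  refine ⟨a, Module.Flat.rTensor_preserves_injective_linearMap f hf ?_⟩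
  rw [← lTensor_rTensor_comm_apply, ha, map_sub, hy, ← LinearMap.comp_apply,
    ← LinearMap.lTensor_comp, hβα, LinearMap.lTensor_zero, LinearMap.zero_apply, sub_zero]

end ExactSequences

section TensorAcyclic

open TensorProduct

variable {R : Type*} [CommRing R] {F : ℕ → Type*} [∀ j, AddCommGroup (F j)]
  [∀ j, Module R (F j)]

/-- The complex `A ⊗ F` is exact in positive degrees, where `F` has differentials `φ`. If `F` is a
flat resolution of `N`, this says that `Tor_i(A, N) = 0` for all `i > 0`. -/
def IsTensorAcyclic (φ : ∀ j, F (j + 1) →ₗ[R] F j) (A : Type*) [AddCommGroup A] [Module R A] :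
    Prop :=
  ∀ j, Function.Exact ((φ (j + 1)).lTensor A) ((φ j).lTensor A)

namespace IsTensorAcyclic

variable {φ : ∀ j, F (j + 1) →ₗ[R] F j} {N : Type*} [AddCommGroup N] [Module R N]
  {q : F 0 →ₗ[R] N} {A B C : Type*} [AddCommGroup A] [Module R A] [AddCommGroup B] [Module R B]
  [AddCommGroup C] [Module R C]

theorem of_subsingleton [Subsingleton A] : IsTensorAcyclic φ A := fun _ x =>
  ⟨fun _ => ⟨0, Subsingleton.elim _ _⟩, fun _ => by rw [Subsingleton.elim x 0, map_zero]⟩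

theorem of_flat [Module.Flat R A] (h : IsResolution φ q) : IsTensorAcyclic φ A := fun j =>
  Module.Flat.lTensor_exact A (h.exact_succ j)

theorem tensorProduct [Module.Flat R B] (hA : IsTensorAcyclic φ A) :
    IsTensorAcyclic φ (A ⊗[R] B) := fun j =>
  exact_lTensor_tensorProduct_iff.2 (Module.Flat.rTensor_exact B (hA j))

variable [∀ j, Module.Flat R (F j)] {f : A →ₗ[R] B} {g : B →ₗ[R] C}

theorem of_shortExact (h : IsResolution φ q) (hf : Function.Injective f)
    (hfg : Function.Exact f g) (hg : Function.Surjective g) (hB : IsTensorAcyclic φ B)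
    (hC : IsTensorAcyclic φ C) : IsTensorAcyclic φ A := by
  have hφ (j : ℕ) : φ j ∘ₗ φ (j + 1) = 0 := (h.exact_succ j).linearMap_comp_eq_zero
  refine fun j => LinearMap.exact_of_comp_eq_zero_of_ker_le_range ?_ fun x hx => ?_
  · rw [← LinearMap.lTensor_comp, hφ, LinearMap.lTensor_zero]
  · refine mem_range_lTensor_of_rTensor_mem_range hf hfg hg (hφ (j + 1)) (hC (j + 1)) ?_
    refine (hB j _).1 ?_
    rw [lTensor_rTensor_comm_apply, LinearMap.mem_ker.1 hx, map_zero]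

theorem rTensor_injective (h : IsResolution φ q) (hf : Function.Injective f)
    (hfg : Function.Exact f g) (hg : Function.Surjective g) (hC : IsTensorAcyclic φ C) :
    Function.Injective (f.rTensor N) := by
  refine (injective_iff_map_eq_zero _).2 fun x hx => ?_
  obtain ⟨y, rfl⟩ := LinearMap.lTensor_surjective A h.surjective x
  refine (lTensor_exact A h.exact_zero h.surjective y).2 ?_
  refine mem_range_lTensor_of_rTensor_mem_range hf hfg hg
    (h.exact_succ 0).linearMap_comp_eq_zero (hC 0) ?_
  refine (lTensor_exact B h.exact_zero h.surjective _).1 ?_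
  rwa [lTensor_rTensor_comm_apply]

variable {K : ℕ → Type*} [∀ n, AddCommGroup (K n)] [∀ n, Module R (K n)]
  {k : ∀ n, K (n + 1) →ₗ[R] K n}

theorem quotient_range (h : IsResolution φ q) (hK : ∀ n, IsTensorAcyclic φ (K n))
    (hk₀ : Function.Surjective (k 0)) (hk : ∀ n, Function.Exact (k (n + 1)) (k n)) (n : ℕ) :
    IsTensorAcyclic φ (K n ⧸ LinearMap.range (k n)) := by
  induction n with
  | zero =>
    have := Submodule.Quotient.subsingleton_iff.2 (LinearMap.range_eq_top.2 hk₀)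
    exact of_subsingleton
  | succ n ih =>
    exact of_shortExact h (LinearMap.injective_range_liftQ_of_exact (hk n)) (exact_liftQ_mkQ _)
      (LinearMap.range (k n)).mkQ_surjective (hK n) ih

theorem exact_rTensor (h : IsResolution φ q) (hK : ∀ n, IsTensorAcyclic φ (K n))
    (hk₀ : Function.Surjective (k 0)) (hk : ∀ n, Function.Exact (k (n + 1)) (k n)) (n : ℕ) :
    Function.Exact ((k (n + 1)).rTensor N) ((k n).rTensor N) := by
  let ι := (LinearMap.range (k (n + 1))).liftQ (k n) (hk n).linearMap_ker_eq.ge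
  have hιN : Function.Injective (ι.rTensor N) :=
    rTensor_injective h (LinearMap.injective_range_liftQ_of_exact (hk n))
      (exact_liftQ_mkQ _) (LinearMap.range (k n)).mkQ_surjective (quotient_range h hK hk₀ hk n)
  have exact_mkQ := rTensor_exact N (LinearMap.exact_map_mkQ_range (k (n + 1)))
    (LinearMap.range (k (n + 1))).mkQ_surjective
  simpa only [← LinearMap.coe_comp, ← LinearMap.rTensor_comp, ι, Submodule.liftQ_mkQ]
    using exact_mkQ.comp_injective _ hιN (map_zero _)

end IsTensorAcyclic

theorem IsAcyclicCover.exact_rTensor {φ : ∀ j, F (j + 1) →ₗ[R] F j} [∀ j, Module.Flat R (F j)]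
    {N : Type*} [AddCommGroup N] [Module R N] {q : F 0 →ₗ[R] N} {X C : ℕ → Type*}
    [∀ n, AddCommGroup (X n)] [∀ n, Module R (X n)] [∀ n, Module.Flat R (X n)]
    [∀ n, AddCommGroup (C n)] [∀ n, Module R (C n)] {d : ∀ n, X (n + 1) →ₗ[R] X n}
    {δ : ∀ n, C (n + 1) →ₗ[R] C n} {π : ∀ n, X n →ₗ[R] C n} (h : IsAcyclicCover d δ π)
    (hδ : ∀ n, δ n ∘ₗ δ (n + 1) = 0) (hφ : IsResolution φ q) (hC : ∀ n, IsTensorAcyclic φ (C n))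
    {n : ℕ} (hCN : Function.Exact ((δ (n + 1)).rTensor N) ((δ n).rTensor N)) :
    Function.Exact ((d (n + 1)).rTensor N) ((d n).rTensor N) := by
  have hπ := h.surjective hδ
  have hker (n : ℕ) : Function.Exact (LinearMap.ker (π n)).subtype (π n) :=
    LinearMap.exact_subtype_ker_map (π n)
  have hK (n : ℕ) : IsTensorAcyclic φ (LinearMap.ker (π n)) :=
    .of_shortExact hφ (Submodule.subtype_injective _) (hker n) (hπ n) (.of_flat hφ) (hC n)
  have hKN := IsTensorAcyclic.exact_rTensor hφ hK h.kerMap_zero_surjective h.kerMap_exact n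
  refine exact_middle_of_exact_of_exact (i₀ := (LinearMap.ker (π n)).subtype.rTensor N)
    (i₁ := (LinearMap.ker (π (n + 1))).subtype.rTensor N)
    (i₂ := (LinearMap.ker (π (n + 2))).subtype.rTensor N) (p₀ := (π n).rTensor N) ?_ ?_ ?_ ?_ ?_
    (IsTensorAcyclic.rTensor_injective hφ (Submodule.subtype_injective _) (hker n) (hπ n) (hC n))
    (rTensor_exact N (hker (n + 1)) (hπ (n + 1))) (LinearMap.rTensor_surjective N (hπ (n + 2)))
    hKN hCN
  · simp only [← LinearMap.rTensor_comp]; rfl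
  · simp only [← LinearMap.rTensor_comp]; rfl
  · simp only [← LinearMap.rTensor_comp, h.comm]
  · simp only [← LinearMap.rTensor_comp, h.comm]
  · rw [← LinearMap.rTensor_comp, h.comp_eq_zero, LinearMap.rTensor_zero]

end TensorAcyclic

section Comparison

open Filter TensorProduct RingTheory.Sequence

theorem IsTensorAcyclic.eventually_exact_lTensor {Q : Type u} [CommRing Q] [IsLocalRing Q]
    (hQ : IsRegularLocal Q) {fs : List Q} (hfs : IsWeaklyRegular Q fs) {M N : Type*}
    [AddCommGroup M] [Module (Q ⧸ Ideal.ofList fs) M] [Module.Finite (Q ⧸ Ideal.ofList fs) M]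
    [AddCommGroup N] [Module (Q ⧸ Ideal.ofList fs) N] [Module.Finite (Q ⧸ Ideal.ofList fs) N]
    [Nontrivial N] {F G : ℕ → Type*} [∀ n, AddCommGroup (F n)]
    [∀ n, Module (Q ⧸ Ideal.ofList fs) (F n)] [∀ n, Module.Flat (Q ⧸ Ideal.ofList fs) (F n)]
    [∀ n, AddCommGroup (G n)] [∀ n, Module (Q ⧸ Ideal.ofList fs) (G n)]
    [∀ n, Module.Flat (Q ⧸ Ideal.ofList fs) (G n)]
    [∀ n, Module.Finite (Q ⧸ Ideal.ofList fs) (G n)]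
    {φ : ∀ n, F (n + 1) →ₗ[Q ⧸ Ideal.ofList fs] F n} {q : F 0 →ₗ[Q ⧸ Ideal.ofList fs] N}
    {γ : ∀ n, G (n + 1) →ₗ[Q ⧸ Ideal.ofList fs] G n} (hM : IsTensorAcyclic φ M)
    (hφ : IsResolution φ q) (hγ : ∀ n, γ n ∘ₗ γ (n + 1) = 0)
    (hMN : ∀ᶠ n in atTop, Function.Exact ((γ (n + 1)).lTensor (M ⊗[Q ⧸ Ideal.ofList fs] N))
      ((γ n).lTensor (M ⊗[Q ⧸ Ideal.ofList fs] N))) :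
    ∀ᶠ n in atTop, Function.Exact ((γ (n + 1)).lTensor M) ((γ n).lTensor M) := by
  have : IsNoetherianRing Q := hQ.1
  obtain ⟨s, d, π, hπ⟩ := exists_isAcyclicCover_fin (C := fun n => M ⊗[Q ⧸ Ideal.ofList fs] G n)
    fun n => (γ n).lTensor M
  have hδ (n : ℕ) : (γ n).lTensor M ∘ₗ (γ (n + 1)).lTensor M = 0 := by
    rw [← LinearMap.lTensor_comp, hγ, LinearMap.lTensor_zero]
  have hdN : ∀ᶠ n in atTop, Function.Exact ((d (n + 1)).rTensor N) ((d n).rTensor N) :=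
    hMN.mono fun n hn => IsAcyclicCover.exact_rTensor
      (X := fun n => Fin (s n) → Q ⧸ Ideal.ofList fs) hπ hδ hφ (fun _ => hM.tensorProduct)
      (exact_lTensor_tensorProduct_iff.1 hn)
  exact (hQ.eventually_exact_of_rTensor hfs hπ.comp_eq_zero hdN).mono fun n hn =>
    hπ.exact_of_exact hδ hn

end Comparison

theorem stmt_2 (Q : Type u) [CommRing Q] [IsLocalRing Q] (hQ : IsRegularLocal Q)
    (f : List Q) (hf : RingTheory.Sequence.IsRegular Q f)
    (M N L : ModuleCat.{u} (Q ⧸ Ideal.ofList f))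
    [Module.Finite (Q ⧸ Ideal.ofList f) M] [Module.Finite (Q ⧸ Ideal.ofList f) N]
    [Module.Finite (Q ⧸ Ideal.ofList f) L]
    (hN : Nontrivial N)
    (htor : ∀ i : ℕ, 0 < i →
      IsZero (((Tor (ModuleCat.{u} (Q ⧸ Ideal.ofList f)) i).obj M).obj N))
    (htorL : ∃ n : ℕ, ∀ i : ℕ, n ≤ i →
      IsZero (((Tor (ModuleCat.{u} (Q ⧸ Ideal.ofList f)) i).obj
        (MonoidalCategory.tensorObj M N)).obj L)) :
    ∃ n : ℕ, ∀ i : ℕ, n ≤ i →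
      IsZero (((Tor (ModuleCat.{u} (Q ⧸ Ideal.ofList f)) i).obj M).obj L) := by
  have : IsNoetherianRing Q := hQ.1
  obtain ⟨F, _, _, _, _, φ, q, hφ⟩ := exists_isResolution_finite_free (R := Q ⧸ Ideal.ofList f) N
  obtain ⟨G, _, _, _, _, γ, _, hγ⟩ := exists_isResolution_finite_free (R := Q ⧸ Ideal.ofList f) L
  have hM : IsTensorAcyclic φ M := fun n =>
    (hφ.isZero_tor_succ_iff M n).1 (htor (n + 1) n.succ_pos)
  have hγ₀ (n : ℕ) : γ n ∘ₗ γ (n + 1) = 0 := (hγ.exact_succ n).linearMap_comp_eq_zero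
  simp only [← Filter.eventually_atTop] at htorL ⊢
  rw [← Filter.map_add_atTop_eq_nat 1, Filter.eventually_map] at htorL ⊢
  have hMN := htorL.mono fun n hn =>
    (hγ.isZero_tor_succ_iff (MonoidalCategory.tensorObj M N) n).1 hn
  exact (hM.eventually_exact_lTensor hQ hf.toIsWeaklyRegular hφ hγ₀ hMN).mono fun n hn =>
    (hγ.isZero_tor_succ_iff M n).2 hn
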